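/- (Infinite acyclic graphs) Let G be a (possibly infinite) acyclic graph on vertex set V and {A_v}_{v∈V} ⊆ B(H) contractions commuting according to G. Then there exists a Hilbert space K ⊇ H and co-isometries {X_v}_{v∈V} ⊆ B(K) commuting according to G such that X_v extends A_v for each v. -/

import Mathlib

open ContinuousLinearMap

/-- Data witnessing the conclusion of the infinite version of Lemma 2.2: a Hilbert
space `K ⊇ H` and co-isometries `{X_v}_{v ∈ V}` on `K` commuting according to the
graph `G` such that `X_v` extends `A_v` for each vertex `v`. -/
structure GraphCoisometricExtension {V : Type} {H : Type}
    [NormedAddCommGroup H] [InnerProductSpace ℂ H] [CompleteSpace H]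
    (G : SimpleGraph V) (A : V → H →L[ℂ] H) where
  K : Type
  [grp : NormedAddCommGroup K]
  [ips : InnerProductSpace ℂ K]
  [cpl : CompleteSpace K]
  emb : H →ₗᵢ[ℂ] K
  X : V → K →L[ℂ] K
  coisometry : ∀ v, X v ∘L ContinuousLinearMap.adjoint (X v) = 1
  commute : ∀ u v, G.Adj u v → X u ∘L X v = X v ∘L X u
  extend : ∀ (v) (x : H), X v (emb x) = emb (A v x)


section Forest

/-- Transport of data along a walk towards its end point. -/
def walkTransport {V : Type} {G : SimpleGraph V} {C : V → Type}
    (base : ∀ v, C v) (step : ∀ u v, G.Adj u v → C u → C v) :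
    {v r : V} → G.Walk v r → C v
  | v, _, .nil => base v
  | _, _, .cons h p => step _ _ h.symm (walkTransport base step p)

theorem forest_choice {V : Type} {G : SimpleGraph V} (hG : G.IsAcyclic) {C : V → Type}
    (R : ∀ u v, C u → C v → Prop) (hR : ∀ u v c d, R u v c d → R v u d c)
    (base : ∀ v, C v) (hstep : ∀ u v, G.Adj u v → ∀ c : C u, ∃ d : C v, R u v c d) :
    ∃ f : ∀ v, C v, ∀ u v, G.Adj u v → R u v (f u) (f v) := by
  choose step hs using hstep
  have key : ∀ (u v : V) (h : G.Adj u v) (r r' : V) (_ : r = r') (p : G.Walk u r)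
      (q : G.Walk v r'), p.IsPath → q.IsPath →
      R u v (walkTransport base step p) (walkTransport base step q) := by
    rintro u v h r _ rfl p q hp hq
    by_cases hv : u ∈ q.support
    · have := hG.path_concat (p := p.reverse) (q := q.reverse) hp.reverse hq.reverse h (by simpa)
      have h2 : q = SimpleGraph.Walk.cons h.symm p := by
        rw [← q.reverse_reverse, this]; simp
      rw [h2]
      exact hs _ _ _ _
    · have hu : p = SimpleGraph.Walk.cons h q :=
        Subtype.mk.inj ((hG.subsingleton_path _ _).elim ⟨p, hp⟩ ⟨_, (SimpleGraph.Walk.cons_isPath_iff _ _).2 ⟨hq, hv⟩⟩)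
      rw [hu]
      exact hR _ _ _ _ (hs _ _ _ _)
  have hP : ∀ v, ∃ p : G.Walk v (Quot.out (G.connectedComponentMk v)), p.IsPath := by
    intro v
    have : G.Reachable v (Quot.out (G.connectedComponentMk v)) := by
      have := Quot.out_eq (G.connectedComponentMk v)
      exact (SimpleGraph.ConnectedComponent.exact this).symm
    exact this.exists_isPath
  choose P hP using hP
  refine ⟨fun v => walkTransport base step (P v), fun u v h => ?_⟩
  refine key u v h _ _ ?_ _ _ (hP u) (hP v)
  rw [SimpleGraph.ConnectedComponent.sound h.reachable]

end Forest

section PartialIsometry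

variable {B B' : Type} [NormedAddCommGroup B] [InnerProductSpace ℂ B] [CompleteSpace B]
  [NormedAddCommGroup B'] [InnerProductSpace ℂ B'] [CompleteSpace B']

theorem exists_partialIsometry {P : Type} [AddCommGroup P] [Module ℂ P]
    (f : P →ₗ[ℂ] B) (f' : P →ₗ[ℂ] B') (hn : ∀ p, ‖f p‖ = ‖f' p‖) :
    ∃ g : B →L[ℂ] B', (∀ p, g (f p) = f' p) ∧ (∀ p, adjoint g (f' p) = f p) ∧
      (∀ x, (∀ p, inner ℂ (f p) x = 0) → g x = 0) ∧
      (∀ x, (∀ p, inner ℂ (f' p) x = 0) → adjoint g x = 0) ∧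
      (∀ x, g (adjoint g (g x)) = g x) := by
  set M : Submodule ℂ B := (LinearMap.range f).topologicalClosure with hM
  have : CompleteSpace M := (Submodule.isClosed_topologicalClosure _).completeSpace_coe
  have hfM : ∀ p, f p ∈ M := fun p => Submodule.le_topologicalClosure _ ⟨p, rfl⟩
  let fM : P →ₗ[ℂ] M := f.codRestrict M hfM
  have hdense : DenseRange fM := by
    rw [DenseRange, Subtype.dense_iff]
    intro x hx
    have : (Subtype.val '' Set.range fM) = (LinearMap.range f : Set B) := by
      ext y; constructor
      · rintro ⟨_, ⟨p, rfl⟩, rfl⟩; exact ⟨p, rfl⟩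
      · rintro ⟨p, rfl⟩; exact ⟨_, ⟨p, rfl⟩, rfl⟩
    have hx' : x ∈ closure (LinearMap.range f : Set B) := hx
    convert hx'
    exact this
  let E : M →L[ℂ] B' := f'.extendOfNorm fM
  have hE : ∀ p, E (fM p) = f' p := fun p =>
    LinearMap.extendOfNorm_eq hdense ⟨1, fun x => by rw [one_mul, ← hn]; rfl⟩ p
  have hEn : ∀ x, ‖E x‖ = ‖x‖ := by
    intro x
    refine hdense.induction_on (p := fun x => ‖E x‖ = ‖x‖) x (isClosed_eq (by fun_prop) (by fun_prop)) ?_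
    intro p; rw [hE, ← hn]; rfl
  let Ei : M →ₗᵢ[ℂ] B' := ⟨E, hEn⟩
  have hEi : ∀ x y, inner ℂ (E x) (E y) = inner ℂ x y := fun x y => Ei.inner_map_map x y
  let g : B →L[ℂ] B' := E ∘L M.orthogonalProjectionOnto
  have hg : ∀ x, g x = E (M.orthogonalProjectionOnto x) := fun x => rfl
  have hgM : ∀ x : M, g x = E x := fun x => by
    rw [hg]; simp
  have hgf : ∀ p, g (f p) = f' p := fun p => by rw [← hE]; exact hgM (fM p)
  have hgE : ∀ x : M, adjoint g (E x) = x := by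
    intro x
    refine ext_inner_right ℂ fun y => ?_
    rw [adjoint_inner_left, hg, hEi, Submodule.inner_orthogonalProjectionOnto_eq_of_mem_left]
  refine ⟨g, hgf, ?_, ?_, ?_, ?_⟩
  · intro p; rw [← hE, hgE]; rfl
  · intro x hx
    rw [hg, Submodule.orthogonalProjectionOnto_apply_of_mem_orthogonal, map_zero]
    rw [hM, Submodule.orthogonal_closure, Submodule.mem_orthogonal]
    rintro _ ⟨p, rfl⟩; exact hx p
  · intro x hx
    refine ext_inner_left ℂ fun y => ?_
    rw [adjoint_inner_right, inner_zero_right, hg]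
    refine hdense.induction_on (p := fun z => inner ℂ (E z) x = 0) _ (isClosed_eq (by fun_prop) (by fun_prop)) ?_
    intro p; rw [hE, hx]
  · intro x
    rw [hg x, hgE, hgM]

end PartialIsometry

section Halmos
variable {B : Type} [NormedAddCommGroup B] [InnerProductSpace ℂ B] [CompleteSpace B]

theorem adj_partial (g : B →L[ℂ] B) (hg : ∀ x, g (adjoint g (g x)) = g x) (x : B) :
    adjoint g (g (adjoint g x)) = adjoint g x := by
  refine ext_inner_left ℂ fun y => ?_
  rw [adjoint_inner_right, ← adjoint_inner_left, ← adjoint_inner_left, adjoint_adjoint]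
  rw [hg, adjoint_inner_right]

theorem halmos_norm (g : B →L[ℂ] B) (hg : ∀ x, g (adjoint g (g x)) = g x) (a b : B) :
    ‖g a + (b - g (adjoint g b))‖ ^ 2 + ‖(a - adjoint g (g a)) + adjoint g b‖ ^ 2
      = ‖a‖ ^ 2 + ‖b‖ ^ 2 := by
  have hg' := adj_partial g hg
  have e1 : inner ℂ (g a) (b - g (adjoint g b)) = 0 := by
    rw [← adjoint_inner_right, map_sub, hg', sub_self, inner_zero_right]
  have e2 : inner ℂ (a - adjoint g (g a)) (adjoint g b) = 0 := by
    rw [adjoint_inner_right, map_sub, hg, sub_self, inner_zero_left]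
  have e3 : inner ℂ (adjoint g (g a)) (a - adjoint g (g a)) = 0 := by
    rw [adjoint_inner_left, map_sub, hg, sub_self, inner_zero_right]
  have e4 : inner ℂ (g (adjoint g b)) (b - g (adjoint g b)) = 0 := by
    rw [← adjoint_inner_right, map_sub, hg', sub_self, inner_zero_right]
  have n1 := norm_add_sq_eq_norm_sq_add_norm_sq_of_inner_eq_zero _ _ e1
  have n2 := norm_add_sq_eq_norm_sq_add_norm_sq_of_inner_eq_zero _ _ e2
  have n3 := norm_add_sq_eq_norm_sq_add_norm_sq_of_inner_eq_zero _ _ e3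
  have n4 := norm_add_sq_eq_norm_sq_add_norm_sq_of_inner_eq_zero _ _ e4
  have n5 : ‖adjoint g (g a)‖ ^ 2 = ‖g a‖ ^ 2 := by
    have h : inner ℂ (adjoint g (g a)) (adjoint g (g a)) = inner ℂ (g a) (g a) := by
      rw [adjoint_inner_left, hg]
    rw [inner_self_eq_norm_sq_to_K, inner_self_eq_norm_sq_to_K] at h
    exact_mod_cast h
  have n6 : ‖g (adjoint g b)‖ ^ 2 = ‖adjoint g b‖ ^ 2 := by
    have h : inner ℂ (g (adjoint g b)) (g (adjoint g b)) = inner ℂ (adjoint g b) (adjoint g b) := by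
      rw [← adjoint_inner_left, hg']
    rw [inner_self_eq_norm_sq_to_K, inner_self_eq_norm_sq_to_K] at h
    exact_mod_cast h
  rw [add_sub_cancel] at n3 n4
  simp only [← pow_two] at n1 n2 n3 n4
  linarith

theorem exists_defect (T : B →L[ℂ] B) (hT : ‖T‖ ≤ 1) :
    ∃ D : B →L[ℂ] B, ∀ x, ‖D x‖ ^ 2 = ‖x‖ ^ 2 - ‖T x‖ ^ 2 := by
  have hpos : (0 : B →L[ℂ] B) ≤ 1 - adjoint T * T := by
    rw [ContinuousLinearMap.nonneg_iff_isPositive]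
    refine (ContinuousLinearMap.isPositive_iff_complex _).2 fun x => ?_
    have : inner ℂ ((1 - adjoint T * T) x) x = ((‖x‖ ^ 2 - ‖T x‖ ^ 2 : ℝ) : ℂ) := by
      simp [adjoint_inner_left, inner_self_eq_norm_sq_to_K]
    rw [this]
    have h2 : ‖T x‖ ≤ ‖x‖ := by simpa using T.le_of_opNorm_le hT x
    have h3 : 0 ≤ ‖x‖ ^ 2 - ‖T x‖ ^ 2 :=
      sub_nonneg.2 (pow_le_pow_left₀ (norm_nonneg _) h2 2)
    generalize ‖x‖ ^ 2 - ‖T x‖ ^ 2 = r at h3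
    exact ⟨by simp, by simpa using h3⟩
  refine ⟨CFC.sqrt (1 - adjoint T * T), fun x => ?_⟩
  set D := CFC.sqrt (1 - adjoint T * T) with hD
  have hDD : D * D = 1 - adjoint T * T := CFC.sqrt_mul_sqrt_self _ hpos
  have hsa : adjoint D = D := (ContinuousLinearMap.nonneg_iff_isPositive D).1 (CFC.sqrt_nonneg _) |>.isSelfAdjoint
  have h : inner ℂ (D x) (D x) = ((‖x‖ ^ 2 - ‖T x‖ ^ 2 : ℝ) : ℂ) := by
    rw [← adjoint_inner_left, hsa]
    change inner ℂ ((D * D) x) x = _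
    rw [hDD]
    simp [adjoint_inner_left, inner_self_eq_norm_sq_to_K]
  rw [inner_self_eq_norm_sq_to_K] at h
  apply Complex.ofReal_injective
  rw [← h]; simp

end Halmos

section Minimal
variable {H B : Type} [NormedAddCommGroup H] [InnerProductSpace ℂ H] [CompleteSpace H]
  [NormedAddCommGroup B] [InnerProductSpace ℂ B] [CompleteSpace B]

/-- `V` is an isometric co-extension of the adjoint of `A`. -/
def IsDil (e : H →ₗᵢ[ℂ] B) (A : H → H) (V : B →ₗᵢ[ℂ] B) : Prop :=
  ∀ x h, inner ℂ (V x) (e h) = inner ℂ x (e (A h))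

theorem intertwine_aux {P : Type} [AddCommGroup P] [Module ℂ P]
    (f f' : P →ₗ[ℂ] B) (V V' : B →ₗᵢ[ℂ] B) (g : B →L[ℂ] B) (hgf : ∀ p, g (f p) = f' p)
    (hg0 : ∀ x, (∀ p, inner ℂ (f p) x = 0) → g x = 0)
    (h1 : ∀ p, ∃ p', V (f p) = f p' ∧ V' (f' p) = f' p')
    (h2 : ∀ y, (∀ p, inner ℂ (f p) y = 0) → ∀ p, inner ℂ (f p) (V y) = 0) (x : B) :
    g (V x) = V' (g x) := by
  let M : Submodule ℂ B := (LinearMap.range f).topologicalClosure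
  have : CompleteSpace M := (Submodule.isClosed_topologicalClosure _).completeSpace_coe
  have hM : ∀ y ∈ M, g (V y) = V' (g y) := by
    intro y hy
    have hy' : y ∈ closure (LinearMap.range f : Set B) := hy
    refine closure_minimal (s := (LinearMap.range f : Set B)) (t := {y | g (V y) = V' (g y)}) ?_
      (isClosed_eq (g.continuous.comp V.continuous) (V'.continuous.comp g.continuous)) hy'
    rintro _ ⟨p, rfl⟩
    obtain ⟨p', e1, e2⟩ := h1 p
    simp only [Set.mem_setOf_eq]
    rw [e1, hgf, hgf, e2]
  have hM' : ∀ y ∈ Mᗮ, g (V y) = V' (g y) := by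
    intro y hy
    have hy' : ∀ p, inner ℂ (f p) y = 0 := fun p =>
      (Submodule.mem_orthogonal _ _).1 hy _ (Submodule.le_topologicalClosure _ ⟨p, rfl⟩)
    rw [hg0 y hy', hg0 _ (h2 y hy'), map_zero]
  obtain ⟨y, hy, z, hz, rfl⟩ := M.exists_add_mem_mem_orthogonal x
  simp only [map_add, hM y hy, hM' z hz]

/-- The map `∑ hₙ ↦ ∑ Vⁿ hₙ`. -/
noncomputable def polyMap (e : H →ₗᵢ[ℂ] B) (V : B →ₗᵢ[ℂ] B) : (ℕ →₀ H) →ₗ[ℂ] B :=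
  Finsupp.lsum ℂ (fun n => (V.toLinearMap ^ n) ∘ₗ e.toLinearMap)

theorem polyMap_zero (e : H →ₗᵢ[ℂ] B) (V : B →ₗᵢ[ℂ] B) (h : H) :
    polyMap e V (Finsupp.single 0 h) = e h := by
  simp [polyMap]

theorem polyMap_succ (e : H →ₗᵢ[ℂ] B) (V : B →ₗᵢ[ℂ] B) (n : ℕ) (h : H) :
    polyMap e V (Finsupp.single (n + 1) h) = V (polyMap e V (Finsupp.single n h)) := by
  simp [polyMap, pow_succ']

theorem polyMap_gram (e : H →ₗᵢ[ℂ] B) (A : H → H) (V V' : B →ₗᵢ[ℂ] B)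
    (hV : IsDil e A V) (hV' : IsDil e A V') (p q : ℕ →₀ H) :
    inner ℂ (polyMap e V p) (polyMap e V q) = inner ℂ (polyMap e V' p) (polyMap e V' q) := by
  have h0 : ∀ n h k, inner ℂ (polyMap e V (Finsupp.single n h)) (e k) =
      inner ℂ (polyMap e V' (Finsupp.single n h)) (e k) := by
    intro n h
    induction n with
    | zero => intro k; simp only [polyMap_zero]
    | succ n ih => intro k; rw [polyMap_succ, polyMap_succ, hV, hV', ih]
  have h1 : ∀ n m h k, inner ℂ (polyMap e V (Finsupp.single n h))
      (polyMap e V (Finsupp.single m k)) = inner ℂ (polyMap e V' (Finsupp.single n h))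
      (polyMap e V' (Finsupp.single m k)) := by
    intro n
    induction n with
    | zero =>
      intro m h k
      rw [polyMap_zero, polyMap_zero, ← inner_conj_symm, h0, inner_conj_symm]
    | succ n ih =>
      intro m h k
      cases m with
      | zero => rw [polyMap_zero, polyMap_zero, h0]
      | succ m =>
        simp only [polyMap_succ e _ n, polyMap_succ e _ m, LinearIsometry.inner_map_map, ih]
  induction p using Finsupp.induction_linear with
  | zero => simp
  | add p p' h h' => simp only [map_add, inner_add_left, h, h']
  | single n h =>
    induction q using Finsupp.induction_linear with
    | zero => simp
    | add p p' h h' => simp only [map_add, inner_add_right, h, h']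
    | single m k => exact h1 n m h k

theorem polyMap_shift (e : H →ₗᵢ[ℂ] B) (V V' : B →ₗᵢ[ℂ] B) (p : ℕ →₀ H) :
    ∃ p', V (polyMap e V p) = polyMap e V p' ∧ V' (polyMap e V' p) = polyMap e V' p' := by
  induction p using Finsupp.induction_linear with
  | zero => exact ⟨0, by simp⟩
  | add p q h h' =>
    obtain ⟨p', h1, h2⟩ := h
    obtain ⟨q', h3, h4⟩ := h'
    exact ⟨p' + q', by simp only [map_add, h1, h3], by simp only [map_add, h2, h4]⟩
  | single n h => exact ⟨Finsupp.single (n + 1) h, (polyMap_succ ..).symm, (polyMap_succ ..).symm⟩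

theorem polyMap_reduce (e : H →ₗᵢ[ℂ] B) (A : H → H) (V : B →ₗᵢ[ℂ] B) (hV : IsDil e A V)
    (y : B) (hy : ∀ p, inner ℂ (polyMap e V p) y = 0) (p : ℕ →₀ H) :
    inner ℂ (polyMap e V p) (V y) = 0 := by
  induction p using Finsupp.induction_linear with
  | zero => simp
  | add p q h h' => rw [map_add, inner_add_left, h, h', add_zero]
  | single n h =>
    cases n with
    | zero =>
      rw [polyMap_zero, ← inner_conj_symm, hV, inner_conj_symm, ← polyMap_zero e V, hy]
    | succ n => rw [polyMap_succ, LinearIsometry.inner_map_map, hy]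

theorem dil_intertwine (e : H →ₗᵢ[ℂ] B) (A : H → H) (V V' : B →ₗᵢ[ℂ] B)
    (hV : IsDil e A V) (hV' : IsDil e A V') :
    ∃ g : B →L[ℂ] B, (∀ h, g (e h) = e h) ∧ (∀ h, adjoint g (e h) = e h) ∧
      (∀ x, g (adjoint g (g x)) = g x) ∧ (∀ x, g (V x) = V' (g x)) ∧
      (∀ x, adjoint g (V' x) = V (adjoint g x)) := by
  obtain ⟨g, h1, h2, h3, h4, h5⟩ := exists_partialIsometry (polyMap e V) (polyMap e V') (by
    intro p
    have h := polyMap_gram e A V V' hV hV' p p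
    rw [norm_eq_sqrt_re_inner (𝕜 := ℂ), norm_eq_sqrt_re_inner (𝕜 := ℂ), h])
  refine ⟨g, fun h => ?_, fun h => ?_, h5, ?_, ?_⟩
  · simpa only [polyMap_zero] using h1 (Finsupp.single 0 h)
  · simpa only [polyMap_zero] using h2 (Finsupp.single 0 h)
  · exact intertwine_aux _ _ V V' g h1 h3 (polyMap_shift e V V') (polyMap_reduce e A V hV)
  · exact intertwine_aux _ _ V' V (adjoint g) h2 h4 (polyMap_shift e V' V)
      (polyMap_reduce e A V' hV')

end Minimal

section Prod
variable {E X Y : Type} [NormedAddCommGroup E] [InnerProductSpace ℂ E]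
  [NormedAddCommGroup X] [InnerProductSpace ℂ X] [NormedAddCommGroup Y] [InnerProductSpace ℂ Y]

/-- The element `(a, b)` of the Hilbert space direct sum. -/
def pr (a : X) (b : Y) : WithLp 2 (X × Y) := WithLp.toLp 2 (a, b)

@[simp] theorem pr_fst (a : X) (b : Y) : (pr a b).fst = a := rfl
@[simp] theorem pr_snd (a : X) (b : Y) : (pr a b).snd = b := rfl
theorem pr_eta (x : WithLp 2 (X × Y)) : pr x.fst x.snd = x := rfl
theorem pr_ext {x y : WithLp 2 (X × Y)} (h1 : x.fst = y.fst) (h2 : x.snd = y.snd) : x = y := by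
  rw [← pr_eta x, ← pr_eta y, h1, h2]

theorem pr_inner (x y : WithLp 2 (X × Y)) :
    inner ℂ x y = inner ℂ x.fst y.fst + inner ℂ x.snd y.snd := rfl

/-- A linear isometry into a direct sum from its two components. -/
noncomputable def isoProd (a : E →ₗ[ℂ] X) (b : E →ₗ[ℂ] Y)
    (h : ∀ x, ‖a x‖ ^ 2 + ‖b x‖ ^ 2 = ‖x‖ ^ 2) : E →ₗᵢ[ℂ] WithLp 2 (X × Y) where
  toFun x := pr (a x) (b x)
  map_add' x y := by apply pr_ext <;> simp
  map_smul' c x := by apply pr_ext <;> simp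
  norm_map' x := by
    have : ‖pr (a x) (b x)‖ ^ 2 = ‖x‖ ^ 2 := by rw [WithLp.prod_norm_sq_eq_of_L2]; exact h x
    exact (pow_left_inj₀ (norm_nonneg _) (norm_nonneg _) two_ne_zero).1 this

@[simp] theorem isoProd_apply (a : E →ₗ[ℂ] X) (b : E →ₗ[ℂ] Y)
    (h : ∀ x, ‖a x‖ ^ 2 + ‖b x‖ ^ 2 = ‖x‖ ^ 2) (x : E) : isoProd a b h x = pr (a x) (b x) := rfl

/-- First coordinate. -/
noncomputable def fstM : WithLp 2 (X × Y) →ₗ[ℂ] X where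
  toFun x := x.fst
  map_add' _ _ := rfl
  map_smul' _ _ := rfl

/-- Second coordinate. -/
noncomputable def sndM : WithLp 2 (X × Y) →ₗ[ℂ] Y where
  toFun x := x.snd
  map_add' _ _ := rfl
  map_smul' _ _ := rfl

@[simp] theorem fstM_apply (x : WithLp 2 (X × Y)) : (fstM x : X) = x.fst := rfl
@[simp] theorem sndM_apply (x : WithLp 2 (X × Y)) : (sndM x : Y) = x.snd := rfl

/-- A linear isometry out of a direct sum. -/
noncomputable def isoSum (s : X →ₗᵢ[ℂ] E) (t : Y →ₗᵢ[ℂ] E)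
    (h : ∀ x y, inner ℂ (s x) (t y) = 0) : WithLp 2 (X × Y) →ₗᵢ[ℂ] E where
  toLinearMap := s.toLinearMap ∘ₗ fstM + t.toLinearMap ∘ₗ sndM
  norm_map' x := by
    have : ‖s x.fst + t x.snd‖ ^ 2 = ‖x‖ ^ 2 := by
      have := norm_add_sq_eq_norm_sq_add_norm_sq_of_inner_eq_zero _ _ (h x.fst x.snd)
      rw [WithLp.prod_norm_sq_eq_of_L2, pow_two, this]
      simp [pow_two]
    exact (pow_left_inj₀ (norm_nonneg _) (norm_nonneg _) two_ne_zero).1 this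

theorem isoSum_apply (s : X →ₗᵢ[ℂ] E) (t : Y →ₗᵢ[ℂ] E)
    (h : ∀ x y, inner ℂ (s x) (t y) = 0) (x : WithLp 2 (X × Y)) :
    isoSum s t h x = s x.fst + t x.snd := rfl

end Prod

section HalmosU
variable {B : Type} [NormedAddCommGroup B] [InnerProductSpace ℂ B] [CompleteSpace B]

theorem halmos_unitary (g : B →L[ℂ] B) (hg : ∀ x, g (adjoint g (g x)) = g x) :
    ∃ U : WithLp 2 (B × B) ≃ₗᵢ[ℂ] WithLp 2 (B × B), ∀ a b,
      U (pr a b) = pr (g a + (b - g (adjoint g b))) ((a - adjoint g (g a)) + adjoint g b) := by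
  have hg' := adj_partial g hg
  let U : WithLp 2 (B × B) →ₗᵢ[ℂ] WithLp 2 (B × B) := isoProd
    (g.toLinearMap ∘ₗ fstM + (sndM - g.toLinearMap ∘ₗ (adjoint g).toLinearMap ∘ₗ sndM))
    ((fstM - (adjoint g).toLinearMap ∘ₗ g.toLinearMap ∘ₗ fstM) + (adjoint g).toLinearMap ∘ₗ sndM)
    (fun x => by
      rw [WithLp.prod_norm_sq_eq_of_L2]
      exact halmos_norm g hg x.fst x.snd)
  have hU : ∀ a b, U (pr a b) =
    pr (g a + (b - g (adjoint g b))) ((a - adjoint g (g a)) + adjoint g b) := fun a b => rfl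
  refine ⟨LinearIsometryEquiv.ofSurjective U ?_, fun a b => hU a b⟩
  intro y
  refine ⟨pr (adjoint g y.fst + (y.snd - adjoint g (g y.snd)))
    ((y.fst - g (adjoint g y.fst)) + g y.snd), ?_⟩
  rw [hU]
  apply pr_ext <;> simp [hg, hg']

theorem dil_unitary {H : Type} [NormedAddCommGroup H] [InnerProductSpace ℂ H] [CompleteSpace H]
    (e : H →ₗᵢ[ℂ] B) (A : H → H) (V V' : B →ₗᵢ[ℂ] B)
    (hV : IsDil e A V) (hV' : IsDil e A V') :
    ∃ U : WithLp 2 (B × B) ≃ₗᵢ[ℂ] WithLp 2 (B × B), (∀ h, U (pr (e h) 0) = pr (e h) 0) ∧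
      ∀ b b', U (pr (V b) (V' b')) = pr (V' (U (pr b b')).fst) (V (U (pr b b')).snd) := by
  obtain ⟨g, h1, h2, h3, h4, h5⟩ := dil_intertwine e A V V' hV hV'
  obtain ⟨U, hU⟩ := halmos_unitary g h3
  refine ⟨U, fun h => ?_, fun b b' => ?_⟩
  · rw [hU]; apply pr_ext <;> simp [h1, h2]
  · rw [hU, hU]; apply pr_ext <;> simp [h4, h5]

end HalmosU

section Lp
variable {I F E : Type} [NormedAddCommGroup F] [InnerProductSpace ℂ F]
  [NormedAddCommGroup E] [InnerProductSpace ℂ E]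

/-- Coordinate embeddings as linear isometries. -/
noncomputable def sg [DecidableEq I] (i : I) : F →ₗᵢ[ℂ] lp (fun _ : I => F) 2 where
  toFun x := lp.single (E := fun _ : I => F) 2 i x
  map_add' x y := lp.single_add (E := fun _ : I => F) 2 i x y
  map_smul' c x := lp.single_smul (E := fun _ : I => F) 2 i c x
  norm_map' x := lp.norm_single (E := fun _ : I => F) (p := 2) (by norm_num) i x

theorem sg_inner [DecidableEq I] (i j : I) (x y : F) :
    inner ℂ (sg i x) (sg j y) = if i = j then inner ℂ x y else 0 := by
  change inner ℂ (lp.single (E := fun _ : I => F) 2 i x) (lp.single (E := fun _ : I => F) 2 j y) = _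
  rw [lp.inner_single_left, lp.single_apply]
  split_ifs with h
  · subst h; simp
  · simp [h]

theorem lp_iso [DecidableEq I] [CompleteSpace E] (S : I → F →ₗᵢ[ℂ] E)
    (hS : ∀ i j, i ≠ j → ∀ x y, inner ℂ (S i x) (S j y) = 0) :
    ∃ s : lp (fun _ : I => F) 2 →ₗᵢ[ℂ] E, ∀ i x, s (sg i x) = S i x := by
  have hV : OrthogonalFamily ℂ (fun _ : I => F) S := fun i j hij x y => hS i j hij x y
  exact ⟨hV.linearIsometry, fun i x => hV.linearIsometry_apply_single x⟩

theorem lp_ext' [DecidableEq I] (f g : lp (fun _ : I => F) 2 →L[ℂ] E)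
    (h : ∀ i x, f (sg i x) = g (sg i x)) (q) : f q = g q := by
  have : f = g := lp.ext_continuousLinearMap (by norm_num) fun i => by
    ext x; exact h i x
  rw [this]

theorem lp_ext [DecidableEq I] (f g : lp (fun _ : I => F) 2 →ₗᵢ[ℂ] E)
    (h : ∀ i x, f (sg i x) = g (sg i x)) (q) : f q = g q :=
  lp_ext' f.toContinuousLinearMap g.toContinuousLinearMap h q

theorem lp_perp [DecidableEq I] (f : lp (fun _ : I => F) 2 →ₗᵢ[ℂ] E) (y : E)
    (h : ∀ i x, inner ℂ y (f (sg i x)) = 0) (q) : inner ℂ y (f q) = 0 :=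
  lp_ext' (innerSL ℂ y ∘L f.toContinuousLinearMap) 0 (fun i x => h i x) q

theorem lp_surj [DecidableEq I] [CompleteSpace E] (f : E →ₗᵢ[ℂ] lp (fun _ : I => F) 2)
    (h : ∀ i x, ∃ y, f y = sg i x) : Function.Surjective f := by
  intro q
  have hcl : IsClosed (Set.range f) := f.isometry.isClosedEmbedding.isClosed_range
  have hq := lp.hasSum_single (E := fun _ : I => F) (p := 2) (by norm_num) q
  have : q ∈ closure (Set.range f) := by
    refine mem_closure_of_tendsto hq (Filter.Eventually.of_forall fun s => ?_)
    have hs : ∑ i ∈ s, lp.single 2 i (q i) ∈ LinearMap.range f.toLinearMap :=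
      Submodule.sum_mem _ fun i _ => (h i (q i))
    exact hs
  rwa [hcl.closure_eq] at this

end Lp

section Absorb
variable {B : Type} [NormedAddCommGroup B] [InnerProductSpace ℂ B] [CompleteSpace B]

/-- The absorbing space: infinitely many copies of `B` for each isometry of `B`. -/
abbrev AbsL (B : Type) [NormedAddCommGroup B] [InnerProductSpace ℂ B] : Type :=
  lp (fun _ : ℕ × (B →ₗᵢ[ℂ] B) => B) 2

theorem exists_absorber : ∃ W : AbsL B →ₗᵢ[ℂ] AbsL B, ∀ V : B →ₗᵢ[ℂ] B,
    ∃ r : WithLp 2 (B × AbsL B) ≃ₗᵢ[ℂ] AbsL B, ∀ b l, W (r (pr b l)) = r (pr (V b) (W l)) := by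
  classical
  obtain ⟨W, hW⟩ := lp_iso (I := ℕ × (B →ₗᵢ[ℂ] B)) (F := B) (E := AbsL B)
    (fun i => (sg i).comp i.2) (fun i j hij x y => by simp [sg_inner, hij])
  refine ⟨W, fun V => ?_⟩
  let σ : ℕ × (B →ₗᵢ[ℂ] B) → ℕ × (B →ₗᵢ[ℂ] B) := fun i => (if i.2 = V then i.1 + 1 else i.1, i.2)
  have hσ : Function.Injective σ := by
    rintro ⟨n, a⟩ ⟨m, b⟩ h
    simp only [σ, Prod.mk.injEq] at h
    obtain ⟨h1, rfl⟩ := h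
    split_ifs at h1 <;> simp_all
  have hσ0 : ∀ i, (0, V) ≠ σ i := by
    rintro ⟨n, a⟩ h
    simp only [σ, Prod.mk.injEq] at h
    obtain ⟨h1, rfl⟩ := h
    simp at h1
  obtain ⟨s, hs⟩ := lp_iso (I := ℕ × (B →ₗᵢ[ℂ] B)) (F := B) (E := AbsL B)
    (fun i => sg (σ i)) (fun i j hij x y => by rw [sg_inner, if_neg (fun h => hij (hσ h))])
  let r0 : WithLp 2 (B × AbsL B) →ₗᵢ[ℂ] AbsL B := isoSum (sg (0, V)) s (fun x y =>
    lp_perp s _ (fun i z => by rw [hs, sg_inner, if_neg (hσ0 i)]) y)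
  have hr0 : ∀ b l, r0 (pr b l) = sg (0, V) b + s l := fun b l => rfl
  have hsurj : Function.Surjective r0 := by
    apply lp_surj
    rintro ⟨n, a⟩ x
    by_cases ha : a = V
    · subst ha
      cases n with
      | zero => exact ⟨pr x 0, by rw [hr0]; simp⟩
      | succ n => exact ⟨pr 0 (sg (n, a) x), by rw [hr0, hs]; simp [σ]⟩
    · exact ⟨pr 0 (sg (n, a) x), by rw [hr0, hs]; simp [σ, ha]⟩
  refine ⟨LinearIsometryEquiv.ofSurjective r0 hsurj, fun b l => ?_⟩
  change W (r0 (pr b l)) = r0 (pr (V b) (W l))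
  rw [hr0, hr0, map_add, hW]
  congr 1
  refine lp_ext (W.comp s) (s.comp W) (fun i x => ?_) l
  simp only [LinearIsometry.coe_comp, Function.comp_apply]
  rw [hs, hW, hW]
  simp only [LinearIsometry.coe_comp, Function.comp_apply, hs]
  rfl

/-- Direct sum of two isometries. -/
noncomputable def dsum {X Y : Type} [NormedAddCommGroup X] [InnerProductSpace ℂ X]
    [NormedAddCommGroup Y] [InnerProductSpace ℂ Y] (V : X →ₗᵢ[ℂ] X) (W : Y →ₗᵢ[ℂ] Y) :
    WithLp 2 (X × Y) →ₗᵢ[ℂ] WithLp 2 (X × Y) :=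
  isoProd (V.toLinearMap ∘ₗ fstM) (W.toLinearMap ∘ₗ sndM) (fun x => by
    rw [WithLp.prod_norm_sq_eq_of_L2]; simp)

theorem dsum_apply {X Y : Type} [NormedAddCommGroup X] [InnerProductSpace ℂ X]
    [NormedAddCommGroup Y] [InnerProductSpace ℂ Y] (V : X →ₗᵢ[ℂ] X) (W : Y →ₗᵢ[ℂ] Y)
    (x : WithLp 2 (X × Y)) : dsum V W x = pr (V x.fst) (W x.snd) := rfl

theorem absorb_unitary {H L : Type} [NormedAddCommGroup H] [InnerProductSpace ℂ H]
    [CompleteSpace H] [NormedAddCommGroup L] [InnerProductSpace ℂ L]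
    (e : H →ₗᵢ[ℂ] B) (A : H → H) (W : L →ₗᵢ[ℂ] L)
    (hW : ∀ V : B →ₗᵢ[ℂ] B, ∃ r : WithLp 2 (B × L) ≃ₗᵢ[ℂ] L,
      ∀ b l, W (r (pr b l)) = r (pr (V b) (W l)))
    (V V' : B →ₗᵢ[ℂ] B) (hV : IsDil e A V) (hV' : IsDil e A V') :
    ∃ θ : WithLp 2 (B × L) ≃ₗᵢ[ℂ] WithLp 2 (B × L), (∀ h, θ (pr (e h) 0) = pr (e h) 0) ∧
      ∀ x, θ (dsum V W x) = dsum V' W (θ x) := by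
  obtain ⟨U, hU1, hU2⟩ := dil_unitary e A V V' hV hV'
  obtain ⟨r, hr⟩ := hW V
  obtain ⟨r', hr'⟩ := hW V'
  let y : WithLp 2 (B × L) →ₗ[ℂ] WithLp 2 (B × L) := r'.symm.toLinearEquiv.toLinearMap ∘ₗ sndM
  let z : WithLp 2 (B × L) →ₗ[ℂ] WithLp 2 (B × B) := U.toLinearEquiv.toLinearMap ∘ₗ
    (WithLp.linearEquiv 2 ℂ (B × B)).symm.toLinearMap ∘ₗ
      LinearMap.prod fstM (fstM ∘ₗ y)
  let w : WithLp 2 (B × L) →ₗ[ℂ] L := r.toLinearEquiv.toLinearMap ∘ₗ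
    (WithLp.linearEquiv 2 ℂ (B × L)).symm.toLinearMap ∘ₗ
      LinearMap.prod (sndM ∘ₗ z) (sndM ∘ₗ y)
  have hy : ∀ x, y x = r'.symm x.snd := fun x => rfl
  have hz : ∀ x, z x = U (pr x.fst (y x).fst) := fun x => rfl
  have hw : ∀ x, w x = r (pr (z x).snd (y x).snd) := fun x => rfl
  let θ0 : WithLp 2 (B × L) →ₗᵢ[ℂ] WithLp 2 (B × L) := isoProd (fstM ∘ₗ z) w (fun x => by
    have e1 : ‖z x‖ ^ 2 = ‖x.fst‖ ^ 2 + ‖(y x).fst‖ ^ 2 := by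
      rw [hz, U.norm_map, WithLp.prod_norm_sq_eq_of_L2]; rfl
    have e2 : ‖w x‖ ^ 2 = ‖(z x).snd‖ ^ 2 + ‖(y x).snd‖ ^ 2 := by
      rw [hw, r.norm_map, WithLp.prod_norm_sq_eq_of_L2]; rfl
    have e3 : ‖x.snd‖ ^ 2 = ‖(y x).fst‖ ^ 2 + ‖(y x).snd‖ ^ 2 := by
      rw [← WithLp.prod_norm_sq_eq_of_L2, hy, r'.symm.norm_map]
    have e4 := WithLp.prod_norm_sq_eq_of_L2 x
    have e5 := WithLp.prod_norm_sq_eq_of_L2 (z x)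
    have e6 : (fstM ∘ₗ z) x = (z x).fst := rfl
    rw [e6]
    linarith)
  have hθ : ∀ b b' l, θ0 (pr b (r' (pr b' l))) =
      pr (U (pr b b')).fst (r (pr (U (pr b b')).snd l)) := by
    intro b b' l
    have e0 : y (pr b (r' (pr b' l))) = pr b' l := by rw [hy]; simp
    have e1 : z (pr b (r' (pr b' l))) = U (pr b b') := by rw [hz, e0]; rfl
    have e2 : w (pr b (r' (pr b' l))) = r (pr (U (pr b b')).snd l) := by rw [hw, e0, e1]; rfl
    change pr (z _).fst (w _) = _
    rw [e1, e2]
  have hdec : ∀ x : WithLp 2 (B × L), ∃ b b' l, x = pr b (r' (pr b' l)) := fun x =>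
    ⟨x.fst, (r'.symm x.snd).fst, (r'.symm x.snd).snd, by rw [pr_eta]; simp [pr_eta]⟩
  have hsurj : Function.Surjective θ0 := by
    intro x
    let v := U.symm (pr x.fst (r.symm x.snd).fst)
    refine ⟨pr v.fst (r' (pr v.snd (r.symm x.snd).snd)), ?_⟩
    rw [hθ, pr_eta]
    simp only [v, LinearIsometryEquiv.apply_symm_apply, pr_fst, pr_snd, pr_eta]
  refine ⟨LinearIsometryEquiv.ofSurjective θ0 hsurj, fun h => ?_, fun x => ?_⟩
  · change θ0 _ = _
    have : (0 : L) = r' (pr 0 0) := (map_zero r').symm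
    conv_lhs => rw [this]
    rw [hθ, hU1]
    simp only [pr_fst, pr_snd]
    congr 1
    exact map_zero r
  · change θ0 _ = dsum V' W (θ0 x)
    obtain ⟨b, b', l, rfl⟩ := hdec x
    rw [hθ, dsum_apply, dsum_apply]
    simp only [pr_fst, pr_snd]
    rw [hr', hθ, hU2, hr]
    rfl

end Absorb

section Ando
variable {H : Type} [NormedAddCommGroup H] [InnerProductSpace ℂ H] [CompleteSpace H]

/-- `H ⊕ H`. -/
abbrev PP (H : Type) [NormedAddCommGroup H] [InnerProductSpace ℂ H] : Type := WithLp 2 (H × H)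
/-- Four copies of `H`. -/
abbrev FF (H : Type) [NormedAddCommGroup H] [InnerProductSpace ℂ H] : Type :=
  WithLp 2 (PP H × PP H)
/-- Square summable sequences in `FF H`. -/
abbrev QQ (H : Type) [NormedAddCommGroup H] [InnerProductSpace ℂ H] : Type :=
  lp (fun _ : ℕ => FF H) 2
/-- The space of the Ando dilation. -/
abbrev BB (H : Type) [NormedAddCommGroup H] [InnerProductSpace ℂ H] : Type := WithLp 2 (H × QQ H)

/-- First half of the half-shift. -/
noncomputable def hα : FF H →ₗ[ℂ] FF H where
  toFun f := pr (pr 0 f.fst.fst) (pr 0 f.snd.fst)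
  map_add' f g := by apply pr_ext <;> apply pr_ext <;> simp
  map_smul' c f := by apply pr_ext <;> apply pr_ext <;> simp

/-- Second half of the half-shift. -/
noncomputable def hβ : FF H →ₗ[ℂ] FF H where
  toFun f := pr (pr f.fst.snd 0) (pr f.snd.snd 0)
  map_add' f g := by apply pr_ext <;> apply pr_ext <;> simp
  map_smul' c f := by apply pr_ext <;> apply pr_ext <;> simp

theorem hα_apply (f : FF H) : hα f = pr (pr 0 f.fst.fst) (pr 0 f.snd.fst) := rfl
theorem hβ_apply (f : FF H) : hβ f = pr (pr f.fst.snd 0) (pr f.snd.snd 0) := rfl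

theorem hαβ_inner (f f' : FF H) : inner ℂ (hα f) (hβ f') = 0 := by
  simp only [pr_inner, hα_apply, hβ_apply, pr_fst, pr_snd]; simp

theorem hβα_inner (f f' : FF H) : inner ℂ (hβ f) (hα f') = 0 := by
  simp only [pr_inner, hα_apply, hβ_apply, pr_fst, pr_snd]; simp

theorem hαβ_norm (f : FF H) : ‖hα f‖ ^ 2 + ‖hβ f‖ ^ 2 = ‖f‖ ^ 2 := by
  simp only [WithLp.prod_norm_sq_eq_of_L2, hα_apply, hβ_apply, pr_fst, pr_snd]
  simp; ring

theorem half_shift : ∃ s : QQ H →ₗᵢ[ℂ] QQ H,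
    ∀ n f, s (sg n f) = sg n (hα f) + sg (n + 1) (hβ f) := by
  let S : ℕ → FF H →ₗᵢ[ℂ] QQ H := fun n =>
    { toLinearMap := (sg n).toLinearMap ∘ₗ hα + (sg (n + 1)).toLinearMap ∘ₗ hβ
      norm_map' := fun f => by
        have h0 : inner ℂ (sg n (hα f) : QQ H) (sg (n + 1) (hβ f)) = 0 := by simp [sg_inner]
        have h1 := norm_add_sq_eq_norm_sq_add_norm_sq_of_inner_eq_zero _ _ h0
        have : ‖(sg n (hα f) : QQ H) + sg (n + 1) (hβ f)‖ ^ 2 = ‖f‖ ^ 2 := by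
          rw [← hαβ_norm, pow_two, h1, LinearIsometry.norm_map, LinearIsometry.norm_map]
          ring
        exact (pow_left_inj₀ (norm_nonneg _) (norm_nonneg _) two_ne_zero).1 this }
  have hS : ∀ n f, S n f = sg n (hα f) + sg (n + 1) (hβ f) := fun n f => rfl
  obtain ⟨s, hs⟩ := lp_iso S (fun i j hij x y => by
    rw [hS, hS]
    simp only [inner_add_left, inner_add_right, sg_inner, hαβ_inner, hβα_inner]
    simp [hij])
  exact ⟨s, fun n f => by rw [hs, hS]⟩

theorem diag_unitary (U : FF H ≃ₗᵢ[ℂ] FF H) :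
    ∃ G : QQ H ≃ₗᵢ[ℂ] QQ H, ∀ n f, G (sg n f) = sg n (U f) := by
  obtain ⟨G, hG⟩ := lp_iso (I := ℕ) (F := FF H) (E := QQ H)
    (fun i => (sg i).comp U.toLinearIsometry) (fun i j hij x y => by simp [sg_inner, hij])
  refine ⟨LinearIsometryEquiv.ofSurjective G (lp_surj G fun n f => ⟨sg n (U.symm f), ?_⟩), hG⟩
  rw [hG]; simp

theorem ando (T₁ T₂ : H →L[ℂ] H) (h₁ : ‖T₁‖ ≤ 1) (h₂ : ‖T₂‖ ≤ 1)
    (hc : ∀ x, T₁ (T₂ x) = T₂ (T₁ x)) :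
    ∃ V₁ V₂ : BB H →ₗᵢ[ℂ] BB H, (∀ x, (V₁ x).fst = T₁ x.fst) ∧ (∀ x, (V₂ x).fst = T₂ x.fst) ∧
      ∀ x, V₁ (V₂ x) = V₂ (V₁ x) := by
  obtain ⟨D₁, hD₁⟩ := exists_defect T₁ h₁
  obtain ⟨D₂, hD₂⟩ := exists_defect T₂ h₂
  obtain ⟨s, hs⟩ := half_shift (H := H)
  -- the embedding of the first coordinate
  let j : H →ₗᵢ[ℂ] FF H := (isoProd LinearMap.id 0 (fun x => by simp) : PP H →ₗᵢ[ℂ] FF H).comp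
    (isoProd LinearMap.id 0 (fun x => by simp) : H →ₗᵢ[ℂ] PP H)
  have hj : ∀ x, j x = pr (pr x 0) 0 := fun x => rfl
  let t : H →ₗᵢ[ℂ] QQ H := (sg 0).comp j
  have ht : ∀ x, t x = sg 0 (pr (pr x 0) 0) := fun x => rfl
  have hst : ∀ x, s (t x) = sg 0 (pr (pr 0 x) 0) := by
    intro x
    have e1 : hα (pr (pr x 0) 0 : FF H) = pr (pr 0 x) 0 := rfl
    have e2 : hβ (pr (pr x 0) 0 : FF H) = 0 := rfl
    rw [ht, hs, e1, e2]; simp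
  have hts : ∀ x q, inner ℂ (t x) (s q) = 0 := by
    intro x q
    refine lp_perp s _ (fun n f => ?_) q
    rw [hs, ht, inner_add_right, sg_inner, sg_inner]
    have : inner ℂ (pr (pr x 0) 0 : FF H) (hα f) = 0 := by
      simp only [pr_inner, hα_apply, pr_fst, pr_snd]; simp
    rw [this]; simp
  have hss : ∀ n f, s (s (sg n f)) = sg (n + 1) f := by
    intro n f
    rw [hs, map_add, hs, hs]
    have e1 : hα (hα f) = 0 := rfl
    have e2 : hβ (hβ f) = 0 := rfl
    have e3 : hβ (hα f) + hα (hβ f) = f := by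
      simp only [hα_apply, hβ_apply]
      apply pr_ext <;> apply pr_ext <;> simp
    rw [e1, e2, map_zero, map_zero, zero_add, add_zero, ← map_add, e3]
  -- the Schaeffer type isometries
  have hWex : ∀ (T D : H →L[ℂ] H), (∀ x, ‖D x‖ ^ 2 = ‖x‖ ^ 2 - ‖T x‖ ^ 2) →
      ∃ W : BB H →ₗᵢ[ℂ] BB H, ∀ x q, W (pr x q) = pr (T x) (t (D x) + s q) := by
    intro T D hD
    refine ⟨isoProd (T.toLinearMap ∘ₗ fstM)
      (t.toLinearMap ∘ₗ D.toLinearMap ∘ₗ fstM + s.toLinearMap ∘ₗ sndM) (fun x => ?_),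
      fun x q => rfl⟩
    have h0 := norm_add_sq_eq_norm_sq_add_norm_sq_of_inner_eq_zero _ _ (hts (D x.fst) x.snd)
    rw [LinearIsometry.norm_map, LinearIsometry.norm_map, ← pow_two, ← pow_two, ← pow_two, hD] at h0
    change ‖T x.fst‖ ^ 2 + ‖t (D x.fst) + s x.snd‖ ^ 2 = _
    rw [h0, WithLp.prod_norm_sq_eq_of_L2]
    ring
  obtain ⟨W₁, hW₁⟩ := hWex T₁ D₁ hD₁
  obtain ⟨W₂, hW₂⟩ := hWex T₂ D₂ hD₂
  -- the unitary
  let f : H →ₗ[ℂ] PP H := (WithLp.linearEquiv 2 ℂ (H × H)).symm.toLinearMap ∘ₗ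
    LinearMap.prod (D₁.toLinearMap ∘ₗ T₂.toLinearMap) D₂.toLinearMap
  let f' : H →ₗ[ℂ] PP H := (WithLp.linearEquiv 2 ℂ (H × H)).symm.toLinearMap ∘ₗ
    LinearMap.prod (D₂.toLinearMap ∘ₗ T₁.toLinearMap) D₁.toLinearMap
  have hf : ∀ x, f x = pr (D₁ (T₂ x)) (D₂ x) := fun x => rfl
  have hf' : ∀ x, f' x = pr (D₂ (T₁ x)) (D₁ x) := fun x => rfl
  obtain ⟨g, hg1, hg2, -, -, hg3⟩ := exists_partialIsometry f f' (fun x => by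
    refine (pow_left_inj₀ (norm_nonneg _) (norm_nonneg _) two_ne_zero).1 ?_
    rw [WithLp.prod_norm_sq_eq_of_L2, WithLp.prod_norm_sq_eq_of_L2, hf, hf']
    simp only [pr_fst, pr_snd, hD₁, hD₂, hc]
    ring)
  obtain ⟨U, hU⟩ := halmos_unitary g hg3
  have hUf : ∀ x, U (pr (f x) 0) = pr (f' x) 0 := by
    intro x
    rw [hU, hg1, hg2]; simp
  obtain ⟨G, hG⟩ := diag_unitary U
  have hGss : ∀ q, G (s (s q)) = s (s (G q)) :=
    lp_ext (G.toLinearIsometry.comp (s.comp s)) ((s.comp s).comp G.toLinearIsometry) (fun n f => by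
      simp only [LinearIsometry.coe_comp, Function.comp_apply,
        LinearIsometryEquiv.coe_toLinearIsometry, hss, hG])
  have hts2 : ∀ a b, t a + s (t b) = sg 0 (pr (pr a b) 0) := by
    intro a b
    rw [hst, ht, ← map_add]
    congr 1
    apply pr_ext <;> apply pr_ext <;> simp
  let I : H →ₗᵢ[ℂ] H := LinearIsometry.id
  let V₁ : BB H →ₗᵢ[ℂ] BB H := (dsum I G.toLinearIsometry).comp W₁
  let V₂ : BB H →ₗᵢ[ℂ] BB H := W₂.comp (dsum I G.symm.toLinearIsometry)
  have hV₁ : ∀ x q, V₁ (pr x q) = pr (T₁ x) (G (t (D₁ x) + s q)) := by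
    intro x q
    change dsum I G.toLinearIsometry (W₁ (pr x q)) = _
    rw [hW₁]; rfl
  have hV₂ : ∀ x q, V₂ (pr x q) = pr (T₂ x) (t (D₂ x) + s (G.symm q)) := by
    intro x q
    change W₂ (pr x (G.symm q)) = _
    rw [hW₂]
  refine ⟨V₁, V₂, fun x => ?_, fun x => ?_, fun x => ?_⟩
  · rw [← pr_eta x, hV₁]; rfl
  · rw [← pr_eta x, hV₂]; rfl
  · rw [← pr_eta x, hV₁, hV₂, hV₁, hV₂, hc]
    congr 1
    rw [LinearIsometryEquiv.symm_apply_apply, s.map_add, s.map_add, ← add_assoc, ← add_assoc,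
      hts2, hts2, G.map_add, hGss, hG, LinearIsometryEquiv.apply_symm_apply, ← hf, ← hf', hUf]

end Ando

set_option maxHeartbeats 2000000 in
theorem final_aux {V : Type} {H : Type}
    [NormedAddCommGroup H] [InnerProductSpace ℂ H] [CompleteSpace H]
    (G : SimpleGraph V) (hG : G.IsAcyclic)
    (A : V → H →L[ℂ] H) (hA : ∀ v, ‖A v‖ ≤ 1)
    (hcomm : ∀ u v, G.Adj u v → A u ∘L A v = A v ∘L A u) :
    ∃ (emb : H →ₗᵢ[ℂ] WithLp 2 (BB H × AbsL (BB H)))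
      (O : V → WithLp 2 (BB H × AbsL (BB H)) →ₗᵢ[ℂ] WithLp 2 (BB H × AbsL (BB H))),
      (∀ u v, G.Adj u v → ∀ x, O u (O v x) = O v (O u x)) ∧
      ∀ v x h, inner ℂ (O v x) (emb h) = inner ℂ x (emb (A v h)) := by
  let e : H →ₗᵢ[ℂ] BB H := isoProd LinearMap.id 0 (fun x => by simp)
  have he : ∀ h, e h = pr h 0 := fun h => rfl
  let emb : H →ₗᵢ[ℂ] WithLp 2 (BB H × AbsL (BB H)) := isoProd e.toLinearMap 0 (fun x => by simp)
  have hemb : ∀ h, emb h = pr (e h) 0 := fun h => rfl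
  have hT : ∀ v, ‖adjoint (A v)‖ ≤ 1 := fun v => by rw [LinearIsometryEquiv.norm_map]; exact hA v
  have hdil : ∀ v (S : BB H →ₗᵢ[ℂ] BB H), (∀ x, (S x).fst = adjoint (A v) x.fst) →
      IsDil e (A v) S := by
    intro v S hS x h
    rw [pr_inner, pr_inner, he, he, hS]
    simp [adjoint_inner_left]
  have hS : ∀ v, ∃ S : BB H →ₗᵢ[ℂ] BB H, IsDil e (A v) S := by
    intro v
    obtain ⟨V₁, -, h1, -, -⟩ := ando _ _ (hT v) (hT v) (fun x => rfl)
    exact ⟨V₁, hdil v V₁ h1⟩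
  choose S hS using hS
  obtain ⟨W, hW⟩ := exists_absorber (B := BB H)
  let C : V → Type := fun _ => {θ : WithLp 2 (BB H × AbsL (BB H)) ≃ₗᵢ[ℂ]
    WithLp 2 (BB H × AbsL (BB H)) // ∀ h, θ (emb h) = emb h}
  let O : ∀ v, C v → WithLp 2 (BB H × AbsL (BB H)) →ₗᵢ[ℂ] WithLp 2 (BB H × AbsL (BB H)) :=
    fun v θ => θ.1.symm.toLinearIsometry.comp ((dsum (S v) W).comp θ.1.toLinearIsometry)
  have hO : ∀ v θ x, O v θ x = θ.1.symm (dsum (S v) W (θ.1 x)) := fun v θ x => rfl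
  obtain ⟨θ, hθ⟩ := forest_choice hG (C := C)
    (fun u v θ φ => ∀ x, O u θ (O v φ x) = O v φ (O u θ x))
    (fun u v c d h x => (h x).symm)
    (fun v => ⟨LinearIsometryEquiv.refl ℂ _, fun h => rfl⟩)
    (by
      intro u v huv θ
      have hc : ∀ x, adjoint (A u) (adjoint (A v) x) = adjoint (A v) (adjoint (A u) x) := by
        intro x
        have := congrArg (fun T => adjoint T x) (hcomm u v huv)
        simp only [adjoint_comp] at this
        exact this.symm
      obtain ⟨V₁, V₂, h1, h2, h12⟩ := ando _ _ (hT u) (hT v) hc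
      obtain ⟨θ₁, hθ₁, hi₁⟩ := absorb_unitary e (A u) W hW (S u) V₁ (hS u) (hdil u V₁ h1)
      obtain ⟨θ₂, hθ₂, hi₂⟩ := absorb_unitary e (A v) W hW V₂ (S v) (hdil v V₂ h2) (hS v)
      refine ⟨⟨(θ.1.trans θ₁).trans θ₂, fun h => ?_⟩, fun x => ?_⟩
      · change θ₂ (θ₁ (θ.1 (emb h))) = _
        rw [θ.2, hemb, hθ₁, hθ₂]
      · have e1 : ∀ x, O u θ x = θ.1.symm (θ₁.symm (dsum V₁ W (θ₁ (θ.1 x)))) := by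
          intro x
          rw [hO, ← hi₁, LinearIsometryEquiv.symm_apply_apply]
        have e2 : ∀ x hh, O v ⟨(θ.1.trans θ₁).trans θ₂, hh⟩ x =
            θ.1.symm (θ₁.symm (dsum V₂ W (θ₁ (θ.1 x)))) := by
          intro x hh
          rw [hO]
          change θ.1.symm (θ₁.symm (θ₂.symm (dsum (S v) W (θ₂ (θ₁ (θ.1 x)))))) = _
          rw [← hi₂, LinearIsometryEquiv.symm_apply_apply]
        simp only [e1, e2, LinearIsometryEquiv.apply_symm_apply]
        simp only [dsum_apply, pr_fst, pr_snd, h12])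
  refine ⟨emb, fun v => O v (θ v), hθ, fun v x h => ?_⟩
  change inner ℂ (O v (θ v) x) (emb h) = _
  rw [hO, ← (θ v).1.inner_map_map, LinearIsometryEquiv.apply_symm_apply, (θ v).2,
    ← (θ v).1.inner_map_map x, (θ v).2, hemb, hemb, dsum_apply,
    pr_inner (X := BB H) (Y := AbsL (BB H)) _ (pr (e h) 0),
    pr_inner (X := BB H) (Y := AbsL (BB H)) _ (pr (e (A v h)) 0)]
  simp only [pr_fst, pr_snd, inner_zero_right]
  rw [hS v]

/-- Infinite version of Lemma 2.2: if `G` is a (possibly infinite) acyclic graph on a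
vertex set `V` and `{A_v}_{v ∈ V}` are contractions on `H` commuting according to `G`,
then there exist a Hilbert space `K ⊇ H` and co-isometries `{X_v}` on `K` commuting
according to `G` with `X_v` extending `A_v` for each `v`. -/
theorem acyclic_coisometric_extension_infinite {V : Type} {H : Type}
    [NormedAddCommGroup H] [InnerProductSpace ℂ H] [CompleteSpace H]
    (G : SimpleGraph V) (hG : G.IsAcyclic)
    (A : V → H →L[ℂ] H) (hA : ∀ v, ‖A v‖ ≤ 1)
    (hcomm : ∀ u v, G.Adj u v → A u ∘L A v = A v ∘L A u) :
    Nonempty (GraphCoisometricExtension G A) := by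
  obtain ⟨emb, O, hc, hd⟩ := final_aux G hG A hA hcomm
  refine ⟨{
    K := WithLp 2 (BB H × AbsL (BB H))
    emb := emb
    X := fun v => adjoint (O v).toContinuousLinearMap
    coisometry := fun v => ?_
    commute := fun u v huv => ?_
    extend := fun v x => ?_ }⟩
  · rw [adjoint_adjoint]
    exact (ContinuousLinearMap.norm_map_iff_adjoint_comp_self _).1 (O v).norm_map
  · rw [← adjoint_comp, ← adjoint_comp]
    congr 1
    ext1 x
    exact (hc u v huv x).symm
  · refine ext_inner_left ℂ fun y => ?_
    rw [adjoint_inner_right]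
    exact hd v y x
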